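/- Fix an integer d ≥ 4 and set β = d/2 − 2. There exist constants c > 0 and ε₀ > 0 such that for every ε ∈ (0, ε₀), every R ∈ (0,1) with g_β(R) = ε, and every point x ∈ ℝ² with ‖x‖ ≤ 1, one has μ_β({y ∈ 𝔻 : the closed segment [x,y] is disjoint from the closed ball of radius R centered at the origin}) ≤ c·ε. -/

import Mathlib

open MeasureTheory

/-- The `β`-distribution on the closed unit disk of `ℝ²`. -/
noncomputable def betaMeasure (β : ℝ) : Measure (EuclideanSpace ℝ (Fin 2)) :=
  volume.withDensity fun x =>
    ENNReal.ofReal (if ‖x‖ ≤ 1 then (β + 1) / Real.pi * (1 - ‖x‖ ^ 2) ^ β else 0)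

/-!
If `y` is visible from `x`, then `y` and the midpoint of `[x, y]` have norm at least `R`, so the
parallelogram law gives `‖x - y‖ ≤ 2√(1 - R²)`. The visible region thus lies in the part of the
annulus `R ≤ ‖y‖ ≤ 1` in a ball of radius `2√(1 - R²)`, which has area `O((1 - R)√(1 - R²))`.
The cap contains a rectangle of area comparable to `(1 - R)√(1 - R²)`. The density is at most
`(β + 1)/π * (1 - R²)^β` on the annulus and at least `4^(-β)` times that on the rectangle.
-/

open Metric Set

section Geometry

/-- The part of the closed unit ball visible from `x` when the closed ball of radius `R` around the
origin is opaque. -/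
def visibleRegion {E : Type*} [SeminormedAddCommGroup E] [NormedSpace ℝ E] (R : ℝ) (x : E) :
    Set E :=
  {y | ‖y‖ ≤ 1 ∧ segment ℝ x y ∩ closedBall (0 : E) R = ∅}

/-- The cap of the closed unit disk cut off by the line at signed distance `R` from the origin. By
rotation invariance of `betaMeasure` it is enough to consider the direction of the first axis. -/
def diskCap (R : ℝ) : Set (EuclideanSpace ℝ (Fin 2)) :=
  {x | ‖x‖ ≤ 1 ∧ R ≤ x 0}

variable {E : Type*} [NormedAddCommGroup E] [InnerProductSpace ℝ E]

lemma dist_sq_le_of_le_norm_midpoint {x y : E} {R S : ℝ} (hR : 0 ≤ R) (hx : ‖x‖ ≤ S)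
    (hy : ‖y‖ ≤ S) (hm : R ≤ ‖midpoint ℝ x y‖) : dist x y ^ 2 ≤ 4 * (S ^ 2 - R ^ 2) := by
  have apollonius :=
    EuclideanGeometry.dist_sq_add_dist_sq_eq_two_mul_dist_midpoint_sq_add_half_dist_sq (0 : E) x y
  simp only [dist_zero_left] at apollonius
  have hx2 : ‖x‖ ^ 2 ≤ S ^ 2 := by gcongr
  have hy2 : ‖y‖ ^ 2 ≤ S ^ 2 := by gcongr
  have hm2 : R ^ 2 ≤ ‖midpoint ℝ x y‖ ^ 2 := by gcongr
  linarith

lemma visibleRegion_subset_annulus_inter_closedBall {x : E} {R : ℝ} (hR : 0 ≤ R) (hx : ‖x‖ ≤ 1) :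
    visibleRegion R x ⊆
      (closedBall 0 1 \ ball 0 R) ∩ closedBall x (2 * √(1 - R ^ 2)) := by
  rintro y ⟨hy, hdisj⟩
  have hout {z : E} (hz : z ∈ segment ℝ x y) : R < ‖z‖ := by
    by_contra! hzR
    exact notMem_empty z (hdisj ▸ ⟨hz, mem_closedBall_zero_iff.2 hzR⟩)
  have hRy : R < ‖y‖ := hout (right_mem_segment ℝ x y)
  have hdist : dist x y ^ 2 ≤ 4 * (1 ^ 2 - R ^ 2) :=
    dist_sq_le_of_le_norm_midpoint hR hx hy (hout (midpoint_mem_segment x y)).le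
  refine ⟨⟨by simpa using hy, by simpa using hRy.le⟩, ?_⟩
  rw [mem_closedBall, dist_comm]
  refine le_of_sq_le_sq ?_ (by positivity)
  rw [mul_pow, Real.sq_sqrt (sub_nonneg.2 (pow_le_one₀ hR (hRy.le.trans hy)))]
  linarith

end Geometry

section Area

lemma measure_prod_inter_prod_univ_le {α γ : Type*} [MeasurableSpace α] [MeasurableSpace γ]
    {μ : Measure α} {ν : Measure γ} [SFinite μ] [SFinite ν] {S : Set (α × γ)}
    (hS : MeasurableSet S) (T : Set α) {c : ENNReal} (hc : ∀ a, ν (Prod.mk a ⁻¹' S) ≤ c) :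
    μ.prod ν (S ∩ T ×ˢ univ) ≤ c * μ T :=
  calc μ.prod ν (S ∩ T ×ˢ univ)
    _ = (μ.restrict T).prod ν S := by
      rw [Measure.restrict_prod_eq_prod_univ, Measure.restrict_apply hS]
    _ = ∫⁻ a in T, ν (Prod.mk a ⁻¹' S) ∂μ := Measure.prod_apply hS
    _ ≤ ∫⁻ _ in T, c ∂μ := lintegral_mono hc
    _ = c * μ T := setLIntegral_const T c

/-- The part of the annulus with radii `R ≤ S` in the double sector around the second axis. There
the vertical lines meet the boundary circles at a steep angle, so that the vertical slices have
length `O(S - R)`; the double sector around the first axis is its image under `Prod.swap`. -/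
def annularDoubleSector (R S : ℝ) : Set (ℝ × ℝ) :=
  {p | |p.1| ≤ |p.2| ∧ R ^ 2 ≤ p.1 ^ 2 + p.2 ^ 2 ∧ p.1 ^ 2 + p.2 ^ 2 ≤ S ^ 2}

lemma measurableSet_annularDoubleSector (R S : ℝ) : MeasurableSet (annularDoubleSector R S) := by
  unfold annularDoubleSector
  measurability

lemma sub_le_of_le_sq_add_sq_of_sq_add_sq_le {R S s t u : ℝ} (hRS : R ≤ S)
    (hu : |s| ≤ u) (huR : R ^ 2 ≤ s ^ 2 + u ^ 2) (htS : s ^ 2 + t ^ 2 ≤ S ^ 2) :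
    t - u ≤ 2 * (S - R) := by
  have hu0 : 0 ≤ u := (abs_nonneg s).trans hu
  have hsu : s ^ 2 ≤ u ^ 2 := sq_le_sq' (neg_le_of_abs_le hu) (le_of_abs_le hu)
  have hRu : R ≤ 2 * u := le_of_sq_le_sq (by linarith [sq_nonneg u]) (by positivity)
  have ht : t ^ 2 ≤ (u + 2 * (S - R)) ^ 2 :=
    calc t ^ 2 ≤ u ^ 2 + (S - R) * (2 * R + (S - R)) := by linarith
      _ ≤ u ^ 2 + (S - R) * (4 * u + 4 * (S - R)) := by
        gcongr u ^ 2 + (S - R) * ?_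
        linarith
      _ = (u + 2 * (S - R)) ^ 2 := by ring
  linarith [le_of_sq_le_sq ht (by linarith)]

lemma volume_slice_annularDoubleSector_le {R S : ℝ} (hRS : R ≤ S) (s : ℝ) :
    volume (Prod.mk s ⁻¹' annularDoubleSector R S) ≤ ENNReal.ofReal (4 * (S - R)) := by
  let upper : Set ℝ := {t | |s| ≤ t ∧ R ^ 2 ≤ s ^ 2 + t ^ 2 ∧ s ^ 2 + t ^ 2 ≤ S ^ 2}
  have hcover : Prod.mk s ⁻¹' annularDoubleSector R S ⊆ upper ∪ -upper := by
    rintro t ⟨hst, hRt, htS⟩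
    rcases abs_choice t with ht | ht <;> rw [ht] at hst
    · exact Or.inl ⟨hst, hRt, htS⟩
    · exact Or.inr ⟨hst, by simpa only [neg_sq] using hRt, by simpa only [neg_sq] using htS⟩
  have hvolume : volume upper ≤ ENNReal.ofReal (2 * (S - R)) := by
    refine (Real.volume_le_diam upper).trans (ediam_le ?_)
    rintro t ⟨hst, hRt, htS⟩ u ⟨hsu, hRu, huS⟩
    rw [edist_dist, Real.dist_eq]
    gcongr
    exact abs_sub_le_iff.2 ⟨sub_le_of_le_sq_add_sq_of_sq_add_sq_le hRS hsu hRu htS,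
      sub_le_of_le_sq_add_sq_of_sq_add_sq_le hRS hst hRt huS⟩
  calc volume (Prod.mk s ⁻¹' annularDoubleSector R S)
    _ ≤ volume upper + volume (-upper) := (measure_mono hcover).trans (measure_union_le _ _)
    _ = 2 * volume upper := by rw [Measure.measure_neg, two_mul]
    _ ≤ 2 * ENNReal.ofReal (2 * (S - R)) := by gcongr
    _ = ENNReal.ofReal (4 * (S - R)) := by
      rw [← ENNReal.ofReal_ofNat 2, ← ENNReal.ofReal_mul zero_le_two]
      ring_nf

lemma volume_annularDoubleSector_inter_strip_le {R S : ℝ} (hRS : R ≤ S) (b ρ : ℝ) :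
    volume (annularDoubleSector R S ∩ closedBall b ρ ×ˢ univ) ≤
      ENNReal.ofReal (8 * (S - R) * ρ) :=
  calc volume (annularDoubleSector R S ∩ closedBall b ρ ×ˢ univ)
    _ ≤ ENNReal.ofReal (4 * (S - R)) * volume (closedBall b ρ) :=
      measure_prod_inter_prod_univ_le (measurableSet_annularDoubleSector R S) _
        (volume_slice_annularDoubleSector_le hRS)
    _ = ENNReal.ofReal (8 * (S - R) * ρ) := by
      rw [Real.volume_closedBall, ← ENNReal.ofReal_mul (by linarith)]
      ring_nf

lemma measurePreserving_coordinates {i j : Fin 2} (hij : i ≠ j) :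
    MeasurePreserving (fun y : EuclideanSpace ℝ (Fin 2) ↦ (y i, y j)) := by
  have h01 : MeasurePreserving (fun y : EuclideanSpace ℝ (Fin 2) ↦ (y 0, y 1)) :=
    (volume_preserving_finTwoArrow ℝ).comp
      (EuclideanSpace.volume_preserving_symm_measurableEquiv_toLp (Fin 2))
  have h10 : MeasurePreserving (fun y : EuclideanSpace ℝ (Fin 2) ↦ (y 1, y 0)) :=
    (Measure.measurePreserving_swap (μ := volume) (ν := volume)).comp h01
  fin_cases i <;> fin_cases j
  exacts [absurd rfl hij, h01, h10, absurd rfl hij]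

lemma volume_annulus_inter_closedBall_le {R S ρ : ℝ} (hR : 0 ≤ R) (hRS : R ≤ S) (hρ : 0 ≤ ρ)
    (x : EuclideanSpace ℝ (Fin 2)) :
    volume ((closedBall 0 S \ ball 0 R) ∩ closedBall x ρ) ≤
      ENNReal.ofReal (16 * (S - R) * ρ) := by
  let piece (i j : Fin 2) : Set (EuclideanSpace ℝ (Fin 2)) :=
    (fun y ↦ (y i, y j)) ⁻¹' (annularDoubleSector R S ∩ closedBall (x i) ρ ×ˢ univ)
  have hpiece {i j : Fin 2} (hij : i ≠ j) :
      volume (piece i j) ≤ ENNReal.ofReal (8 * (S - R) * ρ) := by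
    have hmeas : MeasurableSet (annularDoubleSector R S ∩ closedBall (x i) ρ ×ˢ univ) :=
      (measurableSet_annularDoubleSector R S).inter (measurableSet_closedBall.prod .univ)
    rw [(measurePreserving_coordinates hij).measure_preimage hmeas.nullMeasurableSet]
    exact volume_annularDoubleSector_inter_strip_le hRS (x i) ρ
  have hcover : (closedBall 0 S \ ball 0 R) ∩ closedBall x ρ ⊆ piece 0 1 ∪ piece 1 0 := by
    rintro y ⟨⟨hyS, hyR⟩, hyx⟩
    have hcoord (i : Fin 2) : y i ∈ closedBall (x i) ρ :=
      (PiLp.norm_apply_le (y - x) i).trans (by simpa [dist_eq_norm] using hyx)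
    have hnorm : ‖y‖ ^ 2 = y 0 ^ 2 + y 1 ^ 2 := by
      rw [EuclideanSpace.real_norm_sq_eq, Fin.sum_univ_two]
    have hRy : R ^ 2 ≤ y 0 ^ 2 + y 1 ^ 2 :=
      hnorm ▸ pow_le_pow_left₀ hR (by simpa using hyR) 2
    have hyS : y 0 ^ 2 + y 1 ^ 2 ≤ S ^ 2 :=
      hnorm ▸ pow_le_pow_left₀ (norm_nonneg y) (by simpa using hyS) 2
    rcases le_total |y 0| |y 1| with h | h
    · exact Or.inl ⟨⟨h, hRy, hyS⟩, hcoord 0, mem_univ _⟩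
    · exact Or.inr ⟨⟨h, by rwa [add_comm], by rwa [add_comm]⟩, hcoord 1, mem_univ _⟩
  calc volume ((closedBall 0 S \ ball 0 R) ∩ closedBall x ρ)
    _ ≤ volume (piece 0 1) + volume (piece 1 0) :=
      (measure_mono hcover).trans (measure_union_le _ _)
    _ ≤ ENNReal.ofReal (8 * (S - R) * ρ) + ENNReal.ofReal (8 * (S - R) * ρ) :=
      add_le_add (hpiece zero_ne_one) (hpiece one_ne_zero)
    _ = ENNReal.ofReal (16 * (S - R) * ρ) := by
      have : 0 ≤ 8 * (S - R) * ρ := mul_nonneg (by linarith) hρ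
      rw [← ENNReal.ofReal_add this this]
      ring_nf

lemma volume_rectangle (a b c d : ℝ) :
    volume {y : EuclideanSpace ℝ (Fin 2) | y 0 ∈ Icc a b ∧ y 1 ∈ Icc c d} =
      ENNReal.ofReal (b - a) * ENNReal.ofReal (d - c) := by
  have hmeas : MeasurableSet (Icc a b ×ˢ Icc c d) := measurableSet_Icc.prod measurableSet_Icc
  rw [← Real.volume_Icc, ← Real.volume_Icc, ← Measure.prod_prod]
  exact (measurePreserving_coordinates zero_ne_one).measure_preimage hmeas.nullMeasurableSet

end Area

section BetaMeasure

variable {β R : ℝ}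

lemma betaMeasure_le_mul_volume (hβ : 0 ≤ β) {m : ℝ} (hm : 0 ≤ m)
    {s : Set (EuclideanSpace ℝ (Fin 2))} (hs : ∀ y ∈ s, 1 - ‖y‖ ^ 2 ≤ m) :
    betaMeasure β s ≤ ENNReal.ofReal ((β + 1) / Real.pi * m ^ β) * volume s := by
  rw [betaMeasure, withDensity_apply', ← setLIntegral_const]
  refine setLIntegral_mono measurable_const fun y hy ↦ ENNReal.ofReal_le_ofReal ?_
  split_ifs with hy1
  · have : 0 ≤ 1 - ‖y‖ ^ 2 := sub_nonneg.2 (pow_le_one₀ (norm_nonneg y) hy1)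
    gcongr
    exact hs y hy
  · positivity

lemma mul_volume_le_betaMeasure (hβ : 0 ≤ β) {m : ℝ} (hm : 0 ≤ m)
    {s : Set (EuclideanSpace ℝ (Fin 2))} (hs_meas : MeasurableSet s)
    (hs : ∀ y ∈ s, m ≤ 1 - ‖y‖ ^ 2) :
    ENNReal.ofReal ((β + 1) / Real.pi * m ^ β) * volume s ≤ betaMeasure β s := by
  rw [betaMeasure, withDensity_apply', ← setLIntegral_const]
  refine setLIntegral_mono' hs_meas fun y hy ↦ ENNReal.ofReal_le_ofReal ?_
  have hy1 : ‖y‖ ≤ 1 := (sq_le_one_iff₀ (norm_nonneg y)).1 (by linarith [hs y hy])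
  rw [if_pos hy1]
  gcongr
  exact hs y hy

lemma betaMeasure_visibleRegion_le (hβ : 0 ≤ β) (hR0 : 0 ≤ R) (hR1 : R ≤ 1)
    {x : EuclideanSpace ℝ (Fin 2)} (hx : ‖x‖ ≤ 1) :
    betaMeasure β (visibleRegion R x) ≤
      ENNReal.ofReal ((β + 1) / Real.pi * (1 - R ^ 2) ^ β * (32 * (1 - R) * √(1 - R ^ 2))) := by
  have hsub := visibleRegion_subset_annulus_inter_closedBall hR0 hx
  have hm : 0 ≤ 1 - R ^ 2 := sub_nonneg.2 (pow_le_one₀ hR0 hR1)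
  have hnorm : ∀ y ∈ visibleRegion R x, 1 - ‖y‖ ^ 2 ≤ 1 - R ^ 2 := fun y hy ↦
    sub_le_sub_left (pow_le_pow_left₀ hR0 (by simpa using (hsub hy).1.2) 2) 1
  calc betaMeasure β (visibleRegion R x)
    _ ≤ ENNReal.ofReal ((β + 1) / Real.pi * (1 - R ^ 2) ^ β) * volume (visibleRegion R x) :=
      betaMeasure_le_mul_volume hβ hm hnorm
    _ ≤ ENNReal.ofReal ((β + 1) / Real.pi * (1 - R ^ 2) ^ β) *
          ENNReal.ofReal (16 * (1 - R) * (2 * √(1 - R ^ 2))) := by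
      gcongr
      exact (measure_mono hsub).trans
        (volume_annulus_inter_closedBall_le hR0 hR1 (by positivity) x)
    _ = _ := by
      rw [← ENNReal.ofReal_mul (by positivity)]
      ring_nf

lemma le_betaMeasure_diskCap (hβ : 0 ≤ β) (hR0 : 0 ≤ R) (hR1 : R ≤ 1) :
    ENNReal.ofReal ((β + 1) / Real.pi * ((1 - R ^ 2) / 4) ^ β * ((1 - R) / 2 * √(1 - R ^ 2))) ≤
      betaMeasure β (diskCap R) := by
  have ha : 0 ≤ 1 - R ^ 2 := sub_nonneg.2 (pow_le_one₀ hR0 hR1)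
  let rectangle : Set (EuclideanSpace ℝ (Fin 2)) :=
    {y | y 0 ∈ Icc R (R + (1 - R) / 2) ∧ y 1 ∈ Icc (-(√(1 - R ^ 2) / 2)) (√(1 - R ^ 2) / 2)}
  have hmeas : MeasurableSet rectangle :=
    (measurableSet_Icc.preimage (by fun_prop)).inter (measurableSet_Icc.preimage (by fun_prop))
  have hnorm : ∀ y ∈ rectangle, (1 - R ^ 2) / 4 ≤ 1 - ‖y‖ ^ 2 := by
    rintro y ⟨⟨h0R, h0⟩, h1⟩
    have h0sq : y 0 ^ 2 ≤ (R + (1 - R) / 2) ^ 2 := pow_le_pow_left₀ (hR0.trans h0R) h0 2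
    have h1sq : y 1 ^ 2 ≤ (1 - R ^ 2) / 4 :=
      calc y 1 ^ 2 ≤ (√(1 - R ^ 2) / 2) ^ 2 := sq_le_sq' h1.1 h1.2
        _ = (1 - R ^ 2) / 4 := by rw [div_pow, Real.sq_sqrt ha]; norm_num
    rw [EuclideanSpace.real_norm_sq_eq, Fin.sum_univ_two]
    linarith [sq_nonneg (1 - R)]
  have hsub : rectangle ⊆ diskCap R := fun y hy ↦
    ⟨(sq_le_one_iff₀ (norm_nonneg y)).1 (by linarith [hnorm y hy]), hy.1.1⟩
  calc _ = ENNReal.ofReal ((β + 1) / Real.pi * ((1 - R ^ 2) / 4) ^ β) * volume rectangle := by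
        rw [volume_rectangle, ← ENNReal.ofReal_mul (by linarith),
          ← ENNReal.ofReal_mul (by positivity)]
        ring_nf
    _ ≤ betaMeasure β rectangle := mul_volume_le_betaMeasure hβ (by positivity) hmeas hnorm
    _ ≤ betaMeasure β (diskCap R) := measure_mono hsub

theorem visible_region_measure_bound_general (hβ : 0 ≤ β) (hR0 : 0 ≤ R) (hR1 : R ≤ 1)
    {x : EuclideanSpace ℝ (Fin 2)} (hx : ‖x‖ ≤ 1) :
    betaMeasure β (visibleRegion R x) ≤
      ENNReal.ofReal (64 * 4 ^ β) * betaMeasure β (diskCap R) := by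
  have ha : 0 ≤ 1 - R ^ 2 := sub_nonneg.2 (pow_le_one₀ hR0 hR1)
  calc betaMeasure β (visibleRegion R x)
    _ ≤ ENNReal.ofReal ((β + 1) / Real.pi * (1 - R ^ 2) ^ β * (32 * (1 - R) * √(1 - R ^ 2))) :=
      betaMeasure_visibleRegion_le hβ hR0 hR1 hx
    _ = ENNReal.ofReal (64 * 4 ^ β) * ENNReal.ofReal
          ((β + 1) / Real.pi * ((1 - R ^ 2) / 4) ^ β * ((1 - R) / 2 * √(1 - R ^ 2))) := by
      rw [← ENNReal.ofReal_mul (by positivity), Real.div_rpow ha zero_le_four]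
      congr 1
      field_simp
      ring
    _ ≤ ENNReal.ofReal (64 * 4 ^ β) * betaMeasure β (diskCap R) := by
      gcongr
      exact le_betaMeasure_diskCap hβ hR0 hR1

end BetaMeasure

/-- for `d ≥ 4` and `β = d/2 - 2`, there are `c > 0` and `ε₀ > 0` such
that for all `ε ∈ (0, ε₀)`, all `R ∈ (0,1)` with `g_β(R) = ε` and every `x` with
`‖x‖ ≤ 1`, the `μ_β`-measure of the `ε`-visible region from `x` (the points `y` of the
disk such that the segment `[x,y]` misses the ball of radius `R`) is at most `c·ε`. -/
theorem visible_region_measure_bound (d : ℕ) (hd : 4 ≤ d)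
    (β : ℝ) (hβ : β = (d : ℝ) / 2 - 2) :
    ∃ c : ℝ, 0 < c ∧ ∃ ε₀ : ℝ, 0 < ε₀ ∧ ∀ ε : ℝ, 0 < ε → ε < ε₀ →
      ∀ R : ℝ, 0 < R → R < 1 →
      betaMeasure β {x | ‖x‖ ≤ 1 ∧ R ≤ x 0} = ENNReal.ofReal ε →
      ∀ x : EuclideanSpace ℝ (Fin 2), ‖x‖ ≤ 1 →
      betaMeasure β {y | ‖y‖ ≤ 1 ∧
          segment ℝ x y ∩ Metric.closedBall (0 : EuclideanSpace ℝ (Fin 2)) R = ∅} ≤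
        ENNReal.ofReal (c * ε) := by
  have hβ0 : 0 ≤ β := by
    have : (4 : ℝ) ≤ d := mod_cast hd
    linarith
  refine ⟨64 * 4 ^ β, by positivity, 1, one_pos, fun ε _ _ R hR0 hR1 hcap x hx ↦ ?_⟩
  rw [ENNReal.ofReal_mul (by positivity), ← hcap]
  exact visible_region_measure_bound_general hβ0 hR0.le hR1.le hx
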